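/- arXiv:2009.02812 — 6 statements merged into one kernel-verified Lean document; each statement's English description precedes it below -/
import Mathlib

section
/- In H_k the two-sided ideal generated by the elements p_i^{(1^3)} for 1 ≤ i ≤ k−2, p_0^{(∅,1²)} − p_0^{(1²,∅)}, and p_{0^∨}^{(∅,1²)} − p_{0^∨}^{(1²,∅)} equals the two-sided ideal generated by the elements a³e_ie_{i+1}e_i − ae_i for 1 ≤ i ≤ k−2, a_0a²e_1e_0e_1 − a(t_0^{−1/2}t^{1/2} + t_0^{1/2}t^{−1/2})e_1, and a_ka²e_{k−1}e_ke_{k−1} − a(t_k^{−1/2}t^{1/2} + t_k^{1/2}t^{−1/2})e_{k−1}. Moreover, the two-sided ideal generated by a_0a²e_1e_0e_1 − a(t_0^{−1/2}t^{1/2} + t_0^{1/2}t^{−1/2})e_1 equals the two-sided ideal generated by the pair {p_0^{(∅,1²)}, p_0^{(1²,∅)}}, and the two-sided ideal generated by a_ka²e_{k−1}e_ke_{k−1} − a(t_k^{−1/2}t^{1/2} + t_k^{1/2}t^{−1/2})e_{k−1} equals the two-sided ideal generated by the pair {p_{0^∨}^{(∅,1²)}, p_{0^∨}^{(1²,∅)}}.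 -/
noncomputable section

open scoped BigOperators

namespace TwoBoundaryTL

variable (k : ℕ) (u u0 uk a a0 ak : ℂ)

/-- The free algebra on generators `T_i`, `i : ℕ` (only `i ≤ k` are used). -/
abbrev FA := FreeAlgebra ℂ ℕ

/-- The `i`-th generator of the free algebra. -/
def g (i : ℕ) : FA := FreeAlgebra.ι ℂ i

/-- Scalars in the free algebra. -/
def cst (z : ℂ) : FA := algebraMap ℂ FA z

/-- The defining relations of the two-boundary Hecke algebra `H_k`, with parameters
`u = t^{1/2}`, `u0 = t_0^{1/2}`, `uk = t_k^{1/2}`. -/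
inductive HeckeRel : FA → FA → Prop
  | quad0 : HeckeRel ((g 0 - cst u0) * (g 0 + cst u0⁻¹)) 0
  | quad (i : ℕ) (h1 : 1 ≤ i) (h2 : i ≤ k - 1) :
      HeckeRel ((g i - cst u) * (g i + cst u⁻¹)) 0
  | quadk : HeckeRel ((g k - cst uk) * (g k + cst uk⁻¹)) 0
  | braid0 : HeckeRel (g 0 * g 1 * g 0 * g 1) (g 1 * g 0 * g 1 * g 0)
  | braidk : HeckeRel (g (k-1) * g k * g (k-1) * g k) (g k * g (k-1) * g k * g (k-1))
  | braid (i : ℕ) (h1 : 1 ≤ i) (h2 : i ≤ k - 2) :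
      HeckeRel (g i * g (i+1) * g i) (g (i+1) * g i * g (i+1))
  | comm (i j : ℕ) (hij : i < j) (hj : j ≤ k) (h : 2 ≤ j - i) :
      HeckeRel (g i * g j) (g j * g i)

/-- The two-boundary Hecke algebra `H_k`. -/
def Hecke := RingQuot (HeckeRel k u u0 uk)

instance : Ring (Hecke k u u0 uk) :=
  inferInstanceAs (Ring (RingQuot (HeckeRel k u u0 uk)))

instance : Algebra ℂ (Hecke k u u0 uk) :=
  inferInstanceAs (Algebra ℂ (RingQuot (HeckeRel k u u0 uk)))

/-- The generator `T_i` of `H_k`. -/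
def T (i : ℕ) : Hecke k u u0 uk := RingQuot.mkAlgHom ℂ (HeckeRel k u u0 uk) (g i)

/-- Scalars in `H_k`. -/
def hc (z : ℂ) : Hecke k u u0 uk := algebraMap ℂ (Hecke k u u0 uk) z

/-- The inverse of `T_i`, given by the explicit formulas
`T_0⁻¹ = T_0 - (t_0^{1/2} - t_0^{-1/2})`, `T_i⁻¹ = T_i - (t^{1/2} - t^{-1/2})`,
`T_k⁻¹ = T_k - (t_k^{1/2} - t_k^{-1/2})`. -/
def Tinv (i : ℕ) : Hecke k u u0 uk :=
  if i = 0 then T k u u0 uk 0 - hc k u u0 uk (u0 - u0⁻¹)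
  else if i = k then T k u u0 uk k - hc k u u0 uk (uk - uk⁻¹)
  else T k u u0 uk i - hc k u u0 uk (u - u⁻¹)

/-- The elements `e_0 = a_0⁻¹(T_0 - t_0^{1/2})`, `e_i = a⁻¹(T_i - t^{1/2})` for `1 ≤ i ≤ k-1`,
`e_k = a_k⁻¹(T_k - t_k^{1/2})`. -/
def e (i : ℕ) : Hecke k u u0 uk :=
  if i = 0 then a0⁻¹ • (T k u u0 uk 0 - hc k u u0 uk u0)
  else if i = k then ak⁻¹ • (T k u u0 uk k - hc k u u0 uk uk)
  else a⁻¹ • (T k u u0 uk i - hc k u u0 uk u)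

/-- `W_1 = T_1⁻¹ T_2⁻¹ ⋯ T_{k-1}⁻¹ T_k T_{k-1} ⋯ T_2 T_1 T_0`. -/
def W1 : Hecke k u u0 uk :=
  ((List.range (k-1)).map (fun j => Tinv k u u0 uk (j+1))).prod *
    T k u u0 uk k *
    ((List.range (k-1)).reverse.map (fun j => T k u u0 uk (j+1))).prod *
    T k u u0 uk 0

/-- The Murphy elements: `W_j = T_j W_{j-1} T_j` for `2 ≤ j ≤ k`. -/
def W : ℕ → Hecke k u u0 uk
  | 0 => 1
  | 1 => W1 k u u0 uk
  | j + 2 => T k u u0 uk (j + 2) * W (j + 1) * T k u u0 uk (j + 2)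

/-- `W_1⁻¹ = T_0⁻¹ T_1⁻¹ ⋯ T_{k-1}⁻¹ T_k⁻¹ T_{k-1} ⋯ T_1`. -/
def W1inv : Hecke k u u0 uk :=
  Tinv k u u0 uk 0 *
    ((List.range (k-1)).map (fun j => Tinv k u u0 uk (j+1))).prod *
    Tinv k u u0 uk k *
    ((List.range (k-1)).reverse.map (fun j => T k u u0 uk (j+1))).prod

/-- The inverses of the Murphy elements. -/
def Winv : ℕ → Hecke k u u0 uk
  | 0 => 1
  | 1 => W1inv k u u0 uk
  | j + 2 => Tinv k u u0 uk (j + 2) * Winv (j + 1) * Tinv k u u0 uk (j + 2)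

/-- The central element `Z = W_1 + W_1⁻¹ + ⋯ + W_k + W_k⁻¹`. -/
def Z : Hecke k u u0 uk :=
  ∑ j ∈ Finset.range k, (W k u u0 uk (j + 1) + Winv k u u0 uk (j + 1))

/-- The relations defining the two-boundary Temperley–Lieb algebra as a quotient of `H_k`. -/
inductive TLRel : Hecke k u u0 uk → Hecke k u u0 uk → Prop
  | braidA (i : ℕ) (h1 : 1 ≤ i) (h2 : i ≤ k - 2) :
      TLRel ((a ^ 3) • (e k u u0 uk a a0 ak i * e k u u0 uk a a0 ak (i+1) * e k u u0 uk a a0 ak i)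
        - a • e k u u0 uk a a0 ak i) 0
  | braidB (i : ℕ) (h1 : 1 ≤ i) (h2 : i ≤ k - 2) :
      TLRel ((a ^ 3) • (e k u u0 uk a a0 ak (i+1) * e k u u0 uk a a0 ak i * e k u u0 uk a a0 ak (i+1))
        - a • e k u u0 uk a a0 ak (i+1)) 0
  | bd0 :
      TLRel ((a0 * a ^ 2) • (e k u u0 uk a a0 ak 1 * e k u u0 uk a a0 ak 0 * e k u u0 uk a a0 ak 1)
        - (a * (u0⁻¹ * u + u0 * u⁻¹)) • e k u u0 uk a a0 ak 1) 0
  | bdk :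
      TLRel ((ak * a ^ 2) • (e k u u0 uk a a0 ak (k-1) * e k u u0 uk a a0 ak k * e k u u0 uk a a0 ak (k-1))
        - (a * (uk⁻¹ * u + uk * u⁻¹)) • e k u u0 uk a a0 ak (k-1)) 0

/-- The two-boundary Temperley–Lieb algebra `TL_k`. -/
def TL := RingQuot (TLRel k u u0 uk a a0 ak)

instance : Ring (TL k u u0 uk a a0 ak) :=
  inferInstanceAs (Ring (RingQuot (TLRel k u u0 uk a a0 ak)))

instance : Algebra ℂ (TL k u u0 uk a a0 ak) :=
  inferInstanceAs (Algebra ℂ (RingQuot (TLRel k u u0 uk a a0 ak)))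

/-- The quotient map `H_k → TL_k`. -/
def π : Hecke k u u0 uk →ₐ[ℂ] TL k u u0 uk a a0 ak :=
  RingQuot.mkAlgHom ℂ (TLRel k u u0 uk a a0 ak)

/-- `I_1 = (ae_1)(ae_3)⋯(ae_{k-1})` for `k` even, `(ae_1)(ae_3)⋯(ae_{k-2})e_k` for `k` odd. -/
def I1 : Hecke k u u0 uk :=
  if k % 2 = 0 then
    ((List.range (k / 2)).map (fun j => a • e k u u0 uk a a0 ak (2*j+1))).prod
  else
    ((List.range ((k-1) / 2)).map (fun j => a • e k u u0 uk a a0 ak (2*j+1))).prod *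
      e k u u0 uk a a0 ak k

/-- `I_2 = e_0(ae_2)(ae_4)⋯(ae_{k-2})e_k` for `k` even, `e_0(ae_2)(ae_4)⋯(ae_{k-1})` for `k` odd. -/
def I2 : Hecke k u u0 uk :=
  if k % 2 = 0 then
    e k u u0 uk a a0 ak 0 *
      ((List.range (k / 2 - 1)).map (fun j => a • e k u u0 uk a a0 ak (2*j+2))).prod *
      e k u u0 uk a a0 ak k
  else
    e k u u0 uk a a0 ak 0 *
      ((List.range ((k-1) / 2)).map (fun j => a • e k u u0 uk a a0 ak (2*j+2))).prod

/-- The quantum integer `[k] = (t^{1/2})^{-(k-1)}(1 + t + ⋯ + t^{k-1})`. -/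
def qk : ℂ := (u⁻¹) ^ (k - 1) * ∑ j ∈ Finset.range k, (u ^ 2) ^ j


section Helpers

/-- descending product `t m * ... * t 1` -/
def Cd {A : Type*} [Ring A] (t : ℕ → A) (m : ℕ) : A :=
  ((List.range m).reverse.map (fun j => t (j+1))).prod

lemma Cd_succ {A : Type*} [Ring A] (t : ℕ → A) (m : ℕ) : Cd t (m+1) = t (m+1) * Cd t m := by
  simp [Cd, List.range_succ]

lemma Cd_mul_inv {A : Type*} [Ring A] (t s : ℕ → A) (m : ℕ)
    (h : ∀ i, 1 ≤ i → i ≤ m → t i * s i = 1) :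
    Cd t m * ((List.range m).map (fun j => s (j+1))).prod = 1 := by
  induction m with
  | zero => simp [Cd]
  | succ m ih =>
    rw [Cd_succ, List.range_succ, List.map_append, List.prod_append]
    have h1 := ih (fun i h1 h2 => h i h1 (by omega))
    have h2 := h (m+1) (by omega) le_rfl
    calc _ = t (m+1) * (Cd t m * ((List.range m).map (fun j => s (j+1))).prod) * s (m+1) := by
            simp [mul_assoc]
      _ = 1 := by rw [h1, mul_one, h2]

lemma Cd_unit {A : Type*} [Ring A] (t : ℕ → A) (m : ℕ)
    (h : ∀ i, 1 ≤ i → i ≤ m → IsUnit (t i)) : IsUnit (Cd t m) := by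
  induction m with
  | zero => simp [Cd]
  | succ m ih =>
    rw [Cd_succ]
    exact (h (m+1) (by omega) le_rfl).mul (ih (fun i h1 h2 => h i h1 (by omega)))

lemma Cd_comm {A : Type*} [Ring A] (t : ℕ → A) (m : ℕ) (x : A)
    (h : ∀ i, 1 ≤ i → i ≤ m → t i * x = x * t i) : Cd t m * x = x * Cd t m := by
  induction m with
  | zero => simp [Cd]
  | succ m ih =>
    rw [Cd_succ, mul_assoc, ih (fun i h1 h2 => h i h1 (by omega)), ← mul_assoc,
      h (m+1) (by omega) le_rfl, mul_assoc]

lemma Cd_conj {A : Type*} [Ring A] (t : ℕ → A) (m : ℕ)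
    (hb : ∀ i, 1 ≤ i → i ≤ m → t i * t (i+1) * t i = t (i+1) * t i * t (i+1))
    (hc : ∀ i j, 1 ≤ i → i + 2 ≤ j → j ≤ m + 1 → t i * t j = t j * t i) :
    Cd t m * Cd t (m+1) * t 1 = t (m+1) * (Cd t m * Cd t (m+1)) := by
  induction m with
  | zero => simp [Cd]
  | succ m ih =>
    have ih' := ih (fun i h1 h2 => hb i h1 (by omega))
      (fun i j h1 h2 h3 => hc i j h1 h2 (by omega))
    have hX : Cd t (m+1) * Cd t (m+1+1) = t (m+1) * t (m+2) * (Cd t m * Cd t (m+1)) := by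
      rw [Cd_succ t (m+1)]
      nth_rewrite 1 [Cd_succ t m]
      have := Cd_comm t m (t (m+2)) (fun i h1 h2 => hc i (m+2) h1 (by omega) (by omega))
      calc _ = t (m+1) * (Cd t m * t (m+2)) * Cd t (m+1) := by simp only [mul_assoc]
        _ = _ := by rw [this]; simp only [mul_assoc]
    rw [hX, mul_assoc, ih', ← mul_assoc, hb (m+1) (by omega) le_rfl]
    simp only [mul_assoc]

lemma smul_mem_tsi {A : Type*} [Ring A] [Algebra ℂ A] (I : TwoSidedIdeal A) (z : ℂ) {x : A}
    (h : x ∈ I) : z • x ∈ I := by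
  rw [Algebra.smul_def]; exact I.mul_mem_left _ _ h

lemma inv_of_quad {A : Type*} [Ring A] [Algebra ℂ A] (x : A) (v : ℂ) (hv : v ≠ 0)
    (h : (x - algebraMap ℂ A v) * (x + algebraMap ℂ A v⁻¹) = 0) :
    x * (x - algebraMap ℂ A (v - v⁻¹)) = 1 ∧ (x - algebraMap ℂ A (v - v⁻¹)) * x = 1 := by
  have h1 : algebraMap ℂ A v * algebraMap ℂ A v⁻¹ = 1 := by
    rw [← map_mul, mul_inv_cancel₀ hv, map_one]
  have hc := Algebra.commutes v x
  have hc' := Algebra.commutes v⁻¹ x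
  have h2 : x * x - algebraMap ℂ A v * x + algebraMap ℂ A v⁻¹ * x - 1 = 0 := by
    rw [← h, ← h1, hc']; noncomm_ring
  rw [map_sub]
  constructor
  · rw [mul_sub, mul_sub, ← hc, ← hc', ← sub_eq_zero, ← h2]; abel
  · rw [sub_mul, sub_mul, ← sub_eq_zero, ← h2]; abel

end Helpers

section H
variable {k : ℕ} {u u0 uk : ℂ}

lemma T_rel {x y : FA} (h : HeckeRel k u u0 uk x y) :
    (RingQuot.mkAlgHom ℂ (HeckeRel k u u0 uk) x : Hecke k u u0 uk) =
      RingQuot.mkAlgHom ℂ (HeckeRel k u u0 uk) y := RingQuot.mkAlgHom_rel ℂ h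

/-- the quotient map with codomain `Hecke`. -/
def q (k : ℕ) (u u0 uk : ℂ) : FA →ₐ[ℂ] Hecke k u u0 uk := RingQuot.mkAlgHom ℂ (HeckeRel k u u0 uk)

lemma q_rel {x y : FA} (h : HeckeRel k u u0 uk x y) : q k u u0 uk x = q k u u0 uk y :=
  RingQuot.mkAlgHom_rel ℂ h

lemma q_g (i : ℕ) : q k u u0 uk (g i) = T k u u0 uk i := rfl
lemma q_cst (z : ℂ) : q k u u0 uk (cst z) = algebraMap ℂ (Hecke k u u0 uk) z :=
  (q k u u0 uk).commutes z

lemma T0_inv (hu0 : u0 ≠ 0) : T k u u0 uk 0 * Tinv k u u0 uk 0 = 1 := by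
  have h := q_rel (HeckeRel.quad0 (k := k) (u := u) (u0 := u0) (uk := uk))
  simp only [map_mul, map_sub, map_add, map_zero, q_g, q_cst] at h
  simpa [Tinv, hc] using (inv_of_quad _ u0 hu0 h).1

lemma Ti_inv (hu : u ≠ 0) (i : ℕ) (h1 : 1 ≤ i) (h2 : i + 1 ≤ k) :
    T k u u0 uk i * Tinv k u u0 uk i = 1 ∧ Tinv k u u0 uk i * T k u u0 uk i = 1 := by
  have h := q_rel (HeckeRel.quad (k := k) (u := u) (u0 := u0) (uk := uk) i h1 (by omega))
  simp only [map_mul, map_sub, map_add, map_zero, q_g, q_cst] at h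
  have h3 : i ≠ 0 := by omega
  have h4 : i ≠ k := by omega
  simpa only [Tinv, hc, h3, h4, if_false] using inv_of_quad _ u hu h

lemma T_braid (i : ℕ) (h1 : 1 ≤ i) (h2 : i ≤ k - 2) :
    T k u u0 uk i * T k u u0 uk (i+1) * T k u u0 uk i =
      T k u u0 uk (i+1) * T k u u0 uk i * T k u u0 uk (i+1) := by
  have h := q_rel (HeckeRel.braid (k := k) (u := u) (u0 := u0) (uk := uk) i h1 h2)
  simpa only [map_mul, q_g] using h

lemma T_comm (i j : ℕ) (h : i + 2 ≤ j) (hj : j ≤ k) :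
    T k u u0 uk i * T k u u0 uk j = T k u u0 uk j * T k u u0 uk i := by
  have h := q_rel (HeckeRel.comm (k := k) (u := u) (u0 := u0) (uk := uk) i j (by omega) hj (by omega))
  simpa only [map_mul, q_g] using h

lemma exists_conj (hk : 2 ≤ k) (hu : u ≠ 0) (hu0 : u0 ≠ 0) :
    ∃ X : Hecke k u u0 uk, IsUnit X ∧ X * T k u u0 uk 1 = T k u u0 uk (k-1) * X ∧
      X * (W1 k u u0 uk * Tinv k u u0 uk 0) = T k u u0 uk k * X := by
  obtain ⟨n, rfl⟩ : ∃ n, k = n + 2 := ⟨k - 2, by omega⟩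
  have hun : ∀ i, 1 ≤ i → i ≤ n + 1 → IsUnit (T (n+2) u u0 uk i) := fun i h1 h2 =>
    have := Ti_inv (k := n+2) (u0 := u0) (uk := uk) hu i h1 (by omega)
    ⟨⟨_, _, this.1, this.2⟩, rfl⟩
  refine ⟨Cd (T (n+2) u u0 uk) n * Cd (T (n+2) u u0 uk) (n+1), ?_, ?_, ?_⟩
  · exact (Cd_unit _ _ (fun i h1 h2 => hun i h1 (by omega))).mul (Cd_unit _ _ hun)
  · exact Cd_conj _ n (fun i h1 h2 => T_braid i h1 (by omega))
      (fun i j h1 h2 h3 => T_comm i j h2 (by omega))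
  · have h1 := Cd_mul_inv (T (n+2) u u0 uk) (Tinv (n+2) u u0 uk) (n+1)
      (fun i h1 h2 => (Ti_inv hu i h1 (by omega)).1)
    have h2 := Cd_comm (T (n+2) u u0 uk) n (T (n+2) u u0 uk (n+2))
      (fun i h1 h2 => T_comm i _ (by omega) le_rfl)
    have hW : W1 (n+2) u u0 uk = ((List.range (n+1)).map (fun j => Tinv (n+2) u u0 uk (j+1))).prod *
      T (n+2) u u0 uk (n+2) * Cd (T (n+2) u u0 uk) (n+1) * T (n+2) u u0 uk 0 := rfl
    rw [hW, mul_assoc _ (T (n+2) u u0 uk 0), T0_inv hu0, mul_one]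
    calc _ = Cd (T (n+2) u u0 uk) n * (Cd (T (n+2) u u0 uk) (n+1) *
          ((List.range (n+1)).map (fun j => Tinv (n+2) u u0 uk (j+1))).prod) *
          T (n+2) u u0 uk (n+2) * Cd (T (n+2) u u0 uk) (n+1) := by simp only [mul_assoc]
      _ = _ := by rw [h1, mul_one, h2, mul_assoc]

end H

lemma span_pair_eq {A : Type*} [Ring A] [Algebra ℂ A] (N c d : ℂ) (hN : N ≠ 0) (G x pA pB : A)
    (hA : pA = N⁻¹ • (c • (x * G))) (hB : pB = pA - N⁻¹ • (d • G)) (hd : d ≠ 0) :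
    TwoSidedIdeal.span {G} = TwoSidedIdeal.span {pA, pB} := by
  apply le_antisymm
  · rw [TwoSidedIdeal.span_le]
    rintro y rfl
    have h1 : pA ∈ TwoSidedIdeal.span {pA, pB} := TwoSidedIdeal.subset_span (by simp)
    have h2 : pB ∈ TwoSidedIdeal.span {pA, pB} := TwoSidedIdeal.subset_span (by simp)
    have h3 := smul_mem_tsi _ (d⁻¹ * N) (sub_mem h1 h2)
    have : (d⁻¹ * N) • (pA - pB) = y := by
      rw [hB, sub_sub_cancel, smul_smul, smul_smul]
      rw [show d⁻¹ * N * N⁻¹ * d = 1 by field_simp, one_smul]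
    rwa [this] at h3
  · rw [TwoSidedIdeal.span_le]
    have h : G ∈ TwoSidedIdeal.span {G} := TwoSidedIdeal.subset_span (by simp)
    have h1 : pA ∈ TwoSidedIdeal.span {G} := by
      rw [hA]; exact smul_mem_tsi _ _ (smul_mem_tsi _ _ (TwoSidedIdeal.mul_mem_left _ _ _ h))
    rintro y (rfl | rfl)
    · exact h1
    · rw [hB]; exact sub_mem h1 (smul_mem_tsi _ _ (smul_mem_tsi _ _ h))

/-- the ideal of `H_k` generated by the idempotents `p_i^{(1^3)}`,
`p_0^{(∅,1²)} - p_0^{(1²,∅)}`, `p_{0^∨}^{(∅,1²)} - p_{0^∨}^{(1²,∅)}` coincides with the ideal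
generated by the Temperley–Lieb relation elements; and the corresponding statements for the
boundary idempotent pairs. -/
theorem statement0 (k : ℕ) (hk : 2 ≤ k) (u u0 uk a a0 ak : ℂ)
    (hu : u ≠ 0) (hu0 : u0 ≠ 0) (huk : uk ≠ 0) (ha : a ≠ 0) (ha0 : a0 ≠ 0) (hak : ak ≠ 0)
    (N N0 Nk : ℂ)
    (hN : N = u⁻¹ * (1 + u ^ 2) * (1 + u ^ 2 + u ^ 4))
    (hN0 : N0 = (u0 ^ 2)⁻¹ * (u ^ 2)⁻¹ * (1 + u0 ^ 2) * (1 + u ^ 2) * (1 + u0 ^ 2 * u ^ 2))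
    (hNk : Nk = (uk ^ 2)⁻¹ * (u ^ 2)⁻¹ * (1 + uk ^ 2) * (1 + u ^ 2) * (1 + uk ^ 2 * u ^ 2))
    (hNne : N ≠ 0) (hN0ne : N0 ≠ 0) (hNkne : Nk ≠ 0)
    -- the Temperley–Lieb relation elements
    (F : ℕ → Hecke k u u0 uk)
    (hF : ∀ i, F i = (a ^ 3) • (e k u u0 uk a a0 ak i * e k u u0 uk a a0 ak (i+1) *
        e k u u0 uk a a0 ak i) - a • e k u u0 uk a a0 ak i)
    (F0 : Hecke k u u0 uk)
    (hF0 : F0 = (a0 * a ^ 2) • (e k u u0 uk a a0 ak 1 * e k u u0 uk a a0 ak 0 *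
        e k u u0 uk a a0 ak 1) - (a * (u0⁻¹ * u + u0 * u⁻¹)) • e k u u0 uk a a0 ak 1)
    (Fk : Hecke k u u0 uk)
    (hFk : Fk = (ak * a ^ 2) • (e k u u0 uk a a0 ak (k-1) * e k u u0 uk a a0 ak k *
        e k u u0 uk a a0 ak (k-1)) - (a * (uk⁻¹ * u + uk * u⁻¹)) • e k u u0 uk a a0 ak (k-1))
    -- the idempotents
    (p : ℕ → Hecke k u u0 uk)
    (hp : ∀ i, p i = N⁻¹ • F i)
    (T0v e0v : Hecke k u u0 uk)
    (hT0v : T0v = W1 k u u0 uk * Tinv k u u0 uk 0)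
    (he0v : e0v = ak⁻¹ • (T0v - hc k u u0 uk uk))
    (p0A p0B pvA pvB : Hecke k u u0 uk)
    (hp0A : p0A = N0⁻¹ • ((a0 ^ 2 * a ^ 2) • (e k u u0 uk a a0 ak 0 * e k u u0 uk a a0 ak 1 *
          e k u u0 uk a a0 ak 0 * e k u u0 uk a a0 ak 1)
        - (a0 * a * (u0⁻¹ * u + u0 * u⁻¹)) • (e k u u0 uk a a0 ak 0 * e k u u0 uk a a0 ak 1)))
    (hp0B : p0B = N0⁻¹ • (((a0 ^ 2 * a ^ 2) • (e k u u0 uk a a0 ak 0 * e k u u0 uk a a0 ak 1 *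
            e k u u0 uk a a0 ak 0 * e k u u0 uk a a0 ak 1)
          - (a0 * a * (u0⁻¹ * u + u0 * u⁻¹)) • (e k u u0 uk a a0 ak 0 * e k u u0 uk a a0 ak 1))
        - ((a0 * a ^ 2) • (e k u u0 uk a a0 ak 1 * e k u u0 uk a a0 ak 0 * e k u u0 uk a a0 ak 1)
          - (a * (u0⁻¹ * u + u0 * u⁻¹)) • e k u u0 uk a a0 ak 1)))
    (hpvA : pvA = Nk⁻¹ • ((ak ^ 2 * a ^ 2) • (e0v * e k u u0 uk a a0 ak 1 * e0v *
          e k u u0 uk a a0 ak 1)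
        - (ak * a * (uk⁻¹ * u + uk * u⁻¹)) • (e0v * e k u u0 uk a a0 ak 1)))
    (hpvB : pvB = Nk⁻¹ • (((ak ^ 2 * a ^ 2) • (e0v * e k u u0 uk a a0 ak 1 * e0v *
            e k u u0 uk a a0 ak 1)
          - (ak * a * (uk⁻¹ * u + uk * u⁻¹)) • (e0v * e k u u0 uk a a0 ak 1))
        - ((ak * a ^ 2) • (e k u u0 uk a a0 ak 1 * e0v * e k u u0 uk a a0 ak 1)
          - (a * (uk⁻¹ * u + uk * u⁻¹)) • e k u u0 uk a a0 ak 1))) :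
    TwoSidedIdeal.span ({x | ∃ i, 1 ≤ i ∧ i ≤ k - 2 ∧ x = p i} ∪ {p0A - p0B, pvA - pvB})
      = TwoSidedIdeal.span ({x | ∃ i, 1 ≤ i ∧ i ≤ k - 2 ∧ x = F i} ∪ {F0, Fk}) ∧
    TwoSidedIdeal.span {F0} = TwoSidedIdeal.span {p0A, p0B} ∧
    TwoSidedIdeal.span {Fk} = TwoSidedIdeal.span {pvA, pvB} := by
  obtain ⟨X, hX, hX1, hXv⟩ := exists_conj (k := k) (u := u) (u0 := u0) (uk := uk) hk hu hu0
  obtain ⟨X, rfl⟩ := hX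
  have hcX : ∀ z, (X : Hecke k u u0 uk) * hc k u u0 uk z = hc k u u0 uk z * X :=
    fun z => (Algebra.commutes z _).symm
  have he1 : (X : Hecke k u u0 uk) * e k u u0 uk a a0 ak 1 = e k u u0 uk a a0 ak (k-1) * X := by
    have h1 : (1 : ℕ) ≠ k := by omega
    have h2 : k - 1 ≠ 0 := by omega
    have h3 : k - 1 ≠ k := by omega
    simp only [e, h1, h2, h3, one_ne_zero, if_false]
    rw [mul_smul_comm, smul_mul_assoc, mul_sub, sub_mul, hX1, hcX]
  have hek : (X : Hecke k u u0 uk) * e0v = e k u u0 uk a a0 ak k * X := by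
    have h1 : k ≠ 0 := by omega
    simp only [e, h1, if_false, if_true]
    rw [he0v, hT0v, mul_smul_comm, smul_mul_assoc, mul_sub, sub_mul, hXv, hcX]
  generalize e k u u0 uk a a0 ak 1 = e1 at *
  generalize e k u u0 uk a a0 ak 0 = e0 at *
  generalize e k u u0 uk a a0 ak (k-1) = ek1 at *
  generalize e k u u0 uk a a0 ak k = ek at *
  obtain ⟨Fv, hFv⟩ : ∃ Fv, Fv = (ak * a ^ 2) • (e1 * e0v * e1)
    - (a * (uk⁻¹ * u + uk * u⁻¹)) • e1 := ⟨_, rfl⟩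
  have hXF : (X : Hecke k u u0 uk) * Fv = Fk * X := by
    have h3 : (X : Hecke k u u0 uk) * (e1 * e0v * e1) = ek1 * ek * ek1 * X := by
      rw [← mul_assoc, ← mul_assoc, he1, mul_assoc ek1, hek, mul_assoc, mul_assoc, mul_assoc, he1]
      simp only [mul_assoc]
    rw [hFv, hFk, mul_sub, sub_mul, mul_smul_comm, mul_smul_comm, smul_mul_assoc, smul_mul_assoc,
      h3, he1]
  have hFk' : Fk = X * Fv * ↑X⁻¹ := by rw [hXF, mul_assoc, Units.mul_inv, mul_one]
  have hFv' : Fv = ↑X⁻¹ * Fk * X := by rw [mul_assoc, ← hXF, ← mul_assoc, Units.inv_mul, one_mul]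
  have hd0 : p0A - p0B = N0⁻¹ • F0 := by
    rw [hp0A, hp0B, hF0, ← smul_sub, sub_sub_cancel]
  have hdv : pvA - pvB = Nk⁻¹ • Fv := by
    rw [hpvA, hpvB, hFv, ← smul_sub, sub_sub_cancel]
  have hFkv : ∀ I : TwoSidedIdeal (Hecke k u u0 uk), Fk ∈ I ↔ Fv ∈ I := fun I =>
    ⟨fun h => by rw [hFv']; exact I.mul_mem_right _ _ (I.mul_mem_left _ _ h),
     fun h => by rw [hFk']; exact I.mul_mem_right _ _ (I.mul_mem_left _ _ h)⟩
  have hsm : ∀ (I : TwoSidedIdeal (Hecke k u u0 uk)) (M : ℂ) (x : Hecke k u u0 uk), M ≠ 0 →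
      M⁻¹ • x ∈ I → x ∈ I := fun I M x hM h => by
    have := smul_mem_tsi I M h
    rwa [smul_smul, mul_inv_cancel₀ hM, one_smul] at this
  refine ⟨?_, ?_, ?_⟩
  · rw [hd0, hdv]
    apply le_antisymm
    · rw [TwoSidedIdeal.span_le]
      rintro x (⟨i, h1, h2, rfl⟩ | rfl | rfl)
      · rw [hp]
        exact smul_mem_tsi _ _ (TwoSidedIdeal.subset_span (Or.inl ⟨i, h1, h2, rfl⟩))
      · exact smul_mem_tsi _ _ (TwoSidedIdeal.subset_span (Or.inr (Or.inl rfl)))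
      · exact smul_mem_tsi _ _ ((hFkv _).1 (TwoSidedIdeal.subset_span (Or.inr (Or.inr rfl))))
    · rw [TwoSidedIdeal.span_le]
      rintro x (⟨i, h1, h2, rfl⟩ | rfl | rfl)
      · apply hsm _ N _ hNne
        exact TwoSidedIdeal.subset_span (Or.inl ⟨i, h1, h2, (hp i).symm⟩)
      · exact hsm _ N0 _ hN0ne (TwoSidedIdeal.subset_span (Or.inr (Or.inl rfl)))
      · exact (hFkv _).2 (hsm _ Nk _ hNkne (TwoSidedIdeal.subset_span (Or.inr (Or.inr rfl))))
  · refine span_pair_eq N0 a0 1 hN0ne F0 e0 p0A p0B ?_ ?_ one_ne_zero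
    · rw [hp0A, hF0, mul_sub, mul_smul_comm, mul_smul_comm, ← mul_assoc, ← mul_assoc]
      module
    · rw [one_smul, ← hd0, sub_sub_cancel]
  · have : TwoSidedIdeal.span {Fk} = TwoSidedIdeal.span {Fv} := by
      apply le_antisymm
      · rw [TwoSidedIdeal.span_le]
        rintro x rfl
        exact (hFkv _).2 (TwoSidedIdeal.subset_span rfl)
      · rw [TwoSidedIdeal.span_le]
        rintro x rfl
        exact (hFkv _).1 (TwoSidedIdeal.subset_span rfl)
    rw [this]
    refine span_pair_eq Nk ak 1 hNkne Fv e0v pvA pvB ?_ ?_ one_ne_zero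
    · rw [hpvA, hFv, mul_sub, mul_smul_comm, mul_smul_comm, ← mul_assoc, ← mul_assoc]
      module
    · rw [one_smul, ← hdv, sub_sub_cancel]

end TwoBoundaryTL
end
end

section
/- Set N_0 = t_0^{−1}t^{−1}(1+t_0)(1+t)(1+t_0t) and assume N_0 ≠ 0. In H_k, the element p = N_0^{−1}(T_0T_1T_0T_1 − t_0^{1/2}T_1T_0T_1 − t^{1/2}T_0T_1T_0 + t_0^{1/2}t^{1/2}T_0T_1 + t_0^{1/2}t^{1/2}T_1T_0 − t_0t^{1/2}T_1 − t_0^{1/2}tT_0 + t_0t) satisfies p² = p, T_0·p = −t_0^{−1/2}·p, and T_1·p = −t^{−1/2}·p; moreover N_0·p = a_0²a²e_0e_1e_0e_1 − a_0a(t_0^{−1/2}t^{1/2} + t_0^{1/2}t^{−1/2})e_0e_1 = a_0²a²e_1e_0e_1e_0 − a_0a(t_0^{−1/2}t^{1/2} + t_0^{1/2}t^{−1/2})e_1e_0. -/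
noncomputable section

open scoped BigOperators

namespace TwoBoundaryTL

variable (k : ℕ) (u u0 uk a a0 ak : ℂ)

theorem aux {H : Type*} [Ring H] [Algebra ℂ H] (x y : H) (u v : ℂ)
    (hu : u ≠ 0) (hv : v ≠ 0)
    (hx : x * x = (v - v⁻¹) • x + (1 : ℂ) • (1 : H)) (hy : y * y = (u - u⁻¹) • y + (1 : ℂ) • (1 : H))
    (hb : x * (y * (x * y)) = y * (x * (y * x))) (X : H)
    (hX : X = x * y * x * y - v • (y * x * y) - u • (x * y * x) + (v * u) • (x * y)
        + (v * u) • (y * x) - (v ^ 2 * u) • y - (v * u ^ 2) • x + (v ^ 2 * u ^ 2) • (1 : H)) :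
    x * X = (-v⁻¹) • X ∧ y * X = (-u⁻¹) • X ∧
    X = (x - v • 1) * (y - u • 1) * (x - v • 1) * (y - u • 1)
      - (v⁻¹ * u + v * u⁻¹) • ((x - v • 1) * (y - u • 1)) ∧
    X = (y - u • 1) * (x - v • 1) * (y - u • 1) * (x - v • 1)
      - (v⁻¹ * u + v * u⁻¹) • ((y - u • 1) * (x - v • 1)) := by
  have hx' : ∀ z, x * (x * z) = (v - v⁻¹) • (x * z) + (1 : ℂ) • z := fun z => by
    rw [← mul_assoc, hx]; simp [add_mul]
  have hy' : ∀ z, y * (y * z) = (u - u⁻¹) • (y * z) + (1 : ℂ) • z := fun z => by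
    rw [← mul_assoc, hy]; simp [add_mul]
  subst hX
  refine ⟨?_, ?_, ?_, ?_⟩
  · simp only [mul_assoc, mul_add, mul_sub, mul_smul_comm, mul_one, hx, hx', one_smul]
    match_scalars <;> field_simp <;> ring
  · simp only [mul_assoc, mul_add, mul_sub, mul_smul_comm, mul_one, hb, hy, hy', one_smul]
    match_scalars <;> field_simp <;> ring
  · simp only [mul_assoc, mul_add, mul_sub, add_mul, sub_mul, mul_smul_comm, smul_mul_assoc, mul_one, one_mul,
      hx, hy, one_smul]
    match_scalars <;> field_simp <;> ring
  · simp only [mul_assoc, mul_add, mul_sub, add_mul, sub_mul, mul_smul_comm, smul_mul_assoc, mul_one, one_mul,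
      hb, hx, hy, one_smul]
    match_scalars <;> field_simp <;> ring

theorem quad_aux {H : Type*} [Ring H] [Algebra ℂ H] (x : H) (v : ℂ) (hv : v ≠ 0)
    (h : (x - algebraMap ℂ H v) * (x + algebraMap ℂ H v⁻¹) = 0) :
    x * x = (v - v⁻¹) • x + (1 : ℂ) • (1 : H) := by
  simp only [Algebra.algebraMap_eq_smul_one, mul_add, sub_mul, mul_smul_comm, smul_mul_assoc,
    mul_one, one_mul] at h
  rw [← sub_eq_zero, ← h]
  match_scalars <;> field_simp <;> ring

/-- the idempotent `p_0^{(∅,1²)}` of `H_k`. -/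
theorem statement6 (k : ℕ) (hk : 2 ≤ k) (u u0 uk a a0 ak : ℂ)
    (hu : u ≠ 0) (hu0 : u0 ≠ 0) (huk : uk ≠ 0) (ha : a ≠ 0) (ha0 : a0 ≠ 0) (hak : ak ≠ 0)
    (N0 : ℂ)
    (hN0 : N0 = (u0 ^ 2)⁻¹ * (u ^ 2)⁻¹ * (1 + u0 ^ 2) * (1 + u ^ 2) * (1 + u0 ^ 2 * u ^ 2))
    (hN0ne : N0 ≠ 0)
    (p : Hecke k u u0 uk)
    (hp : p = N0⁻¹ • (T k u u0 uk 0 * T k u u0 uk 1 * T k u u0 uk 0 * T k u u0 uk 1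
        - u0 • (T k u u0 uk 1 * T k u u0 uk 0 * T k u u0 uk 1)
        - u • (T k u u0 uk 0 * T k u u0 uk 1 * T k u u0 uk 0)
        + (u0 * u) • (T k u u0 uk 0 * T k u u0 uk 1)
        + (u0 * u) • (T k u u0 uk 1 * T k u u0 uk 0)
        - (u0 ^ 2 * u) • T k u u0 uk 1
        - (u0 * u ^ 2) • T k u u0 uk 0
        + (u0 ^ 2 * u ^ 2) • (1 : Hecke k u u0 uk))) :
    p * p = p ∧
    T k u u0 uk 0 * p = (-u0⁻¹) • p ∧
    T k u u0 uk 1 * p = (-u⁻¹) • p ∧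
    N0 • p = (a0 ^ 2 * a ^ 2) • (e k u u0 uk a a0 ak 0 * e k u u0 uk a a0 ak 1 *
          e k u u0 uk a a0 ak 0 * e k u u0 uk a a0 ak 1)
        - (a0 * a * (u0⁻¹ * u + u0 * u⁻¹)) • (e k u u0 uk a a0 ak 0 * e k u u0 uk a a0 ak 1) ∧
    N0 • p = (a0 ^ 2 * a ^ 2) • (e k u u0 uk a a0 ak 1 * e k u u0 uk a a0 ak 0 *
          e k u u0 uk a a0 ak 1 * e k u u0 uk a a0 ak 0)
        - (a0 * a * (u0⁻¹ * u + u0 * u⁻¹)) • (e k u u0 uk a a0 ak 1 * e k u u0 uk a a0 ak 0) := by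
  have hx := quad_aux (T k u u0 uk 0) u0 hu0 (by
    have := RingQuot.mkAlgHom_rel ℂ (HeckeRel.quad0 (k := k) (u := u) (u0 := u0) (uk := uk))
    rw [map_mul, map_sub, map_add, map_zero] at this
    simp only [cst, AlgHom.commutes] at this
    exact this)
  have hy := quad_aux (T k u u0 uk 1) u hu (by
    have := RingQuot.mkAlgHom_rel ℂ (HeckeRel.quad (k := k) (u := u) (u0 := u0) (uk := uk) 1
      le_rfl (by omega))
    rw [map_mul, map_sub, map_add, map_zero] at this
    simp only [cst, AlgHom.commutes] at this
    exact this)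
  have hb : T k u u0 uk 0 * (T k u u0 uk 1 * (T k u u0 uk 0 * T k u u0 uk 1)) =
      T k u u0 uk 1 * (T k u u0 uk 0 * (T k u u0 uk 1 * T k u u0 uk 0)) := by
    have := RingQuot.mkAlgHom_rel ℂ (HeckeRel.braid0 (k := k) (u := u) (u0 := u0) (uk := uk))
    simp only [map_mul] at this
    rw [← mul_assoc, ← mul_assoc, ← mul_assoc, ← mul_assoc]
    exact this
  have e0 : e k u u0 uk a a0 ak 0 = a0⁻¹ • (T k u u0 uk 0 - u0 • 1) := by
    simp [e, hc, Algebra.algebraMap_eq_smul_one]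
  have e1 : e k u u0 uk a a0 ak 1 = a⁻¹ • (T k u u0 uk 1 - u • 1) := by
    have : 1 ≠ k := by omega
    simp [e, hc, Algebra.algebraMap_eq_smul_one, this]
  rw [e0, e1]
  generalize T k u u0 uk 0 = x at *
  generalize T k u u0 uk 1 = y at *
  obtain ⟨h1, h2, h3, h4⟩ := aux x y u u0 hu hu0 hx hy hb _ rfl
  have hNp := (inv_smul_eq_iff₀ hN0ne).1 hp.symm |>.symm
  have q1 : x * p = (-u0⁻¹) • p := by
    rw [hp, mul_smul_comm, h1, smul_comm]
  have q2 : y * p = (-u⁻¹) • p := by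
    rw [hp, mul_smul_comm, h2, smul_comm]
  refine ⟨?_, q1, q2, ?_, ?_⟩
  · have : (N0 • p) * p = N0 • p := by
      conv_lhs => rw [hNp]
      simp only [mul_assoc, add_mul, sub_mul, smul_mul_assoc, one_mul, mul_smul_comm, q1, q2]
      rw [hN0]
      match_scalars
      field_simp
      ring
    rw [smul_mul_assoc] at this
    exact smul_right_injective _ hN0ne this
  · rw [hNp, h3]
    simp only [smul_mul_assoc, mul_smul_comm, smul_smul]
    congr 1
    · rw [show a0 ^ 2 * a ^ 2 * (a⁻¹ * (a0⁻¹ * (a⁻¹ * a0⁻¹))) = 1 by field_simp, one_smul]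
    · congr 1; field_simp
  · rw [hNp, h4]
    simp only [smul_mul_assoc, mul_smul_comm, smul_smul]
    congr 1
    · rw [show a0 ^ 2 * a ^ 2 * (a0⁻¹ * (a⁻¹ * (a0⁻¹ * a⁻¹))) = 1 by field_simp, one_smul]
    · congr 1; field_simp
end TwoBoundaryTL
end
end

section
/- In H_k set W_1 = T_1^{−1}T_2^{−1}⋯T_{k−1}^{−1}T_kT_{k−1}⋯T_2T_1T_0, T_{0^∨} = W_1T_0^{−1}, and T_{w_A} = (T_1)(T_2T_1)(T_3T_2T_1)⋯(T_{k−1}T_{k−2}⋯T_1). Then: (i) (T_{0^∨} − t_k^{1/2})(T_{0^∨} + t_k^{−1/2}) = 0; (ii) T_{0^∨}T_1T_{0^∨}T_1 = T_1T_{0^∨}T_1T_{0^∨}; (iii) T_{w_A}^{−1}T_kT_{w_A} = T_{0^∨}; and (iv) T_{w_A}^{−1}T_{k−1}T_{w_A} = T_1. -/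
noncomputable section

open scoped BigOperators

namespace TwoBoundaryTL

variable (k : ℕ) (u u0 uk a a0 ak : ℂ)

section aux

variable {R : Type*} [Ring R] (t ti : ℕ → R)

def qq (n : ℕ) : R := ((List.range n).reverse.map (fun j => t (j+1))).prod
def qi (n : ℕ) : R := ((List.range n).map (fun j => ti (j+1))).prod
def aa (n : ℕ) : R := ((List.range n).map (fun m => qq t (m+1))).prod
def ai (n : ℕ) : R := ((List.range n).reverse.map (fun m => qi ti (m+1))).prod

theorem qq_zero : qq t 0 = 1 := by simp [qq]
theorem qq_succ (n : ℕ) : qq t (n+1) = t (n+1) * qq t n := by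
  simp [qq, List.range_succ]
theorem qi_succ (n : ℕ) : qi ti (n+1) = qi ti n * ti (n+1) := by
  simp [qi, List.range_succ]
theorem aa_succ (n : ℕ) : aa t (n+1) = aa t n * qq t (n+1) := by
  simp [aa, List.range_succ]
theorem ai_succ (n : ℕ) : ai ti (n+1) = qi ti (n+1) * ai ti n := by
  simp [ai, List.range_succ]

theorem qi_qq (n : ℕ) (h : ∀ i, 1 ≤ i → i ≤ n → ti i * t i = 1) : qi ti n * qq t n = 1 := by
  induction n with
  | zero => simp [qi, qq]
  | succ n ih =>
    rw [qi_succ, qq_succ, mul_assoc, ← mul_assoc (ti _), h _ (by omega) le_rfl, one_mul]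
    exact ih fun i h1 h2 => h i h1 (by omega)

theorem qq_qi (n : ℕ) (h : ∀ i, 1 ≤ i → i ≤ n → t i * ti i = 1) : qq t n * qi ti n = 1 := by
  induction n with
  | zero => simp [qi, qq]
  | succ n ih =>
    rw [qi_succ, qq_succ, mul_assoc, ← mul_assoc (qq t n),
      ih fun i h1 h2 => h i h1 (by omega), one_mul, h _ (by omega) le_rfl]

theorem ai_aa (n : ℕ) (h : ∀ i, 1 ≤ i → i ≤ n → ti i * t i = 1) : ai ti n * aa t n = 1 := by
  induction n with
  | zero => simp [ai, aa]
  | succ n ih =>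
    have ih' := ih fun i h1 h2 => h i h1 (by omega)
    rw [ai_succ, aa_succ, mul_assoc, ← mul_assoc (ai ti n), ih', one_mul, qi_qq t ti _ h]

theorem aa_ai (n : ℕ) (h : ∀ i, 1 ≤ i → i ≤ n → t i * ti i = 1) : aa t n * ai ti n = 1 := by
  induction n with
  | zero => simp [ai, aa]
  | succ n ih =>
    have ih' := ih fun i h1 h2 => h i h1 (by omega)
    rw [ai_succ, aa_succ, mul_assoc, ← mul_assoc (qq t _), qq_qi t ti _ h, one_mul, ih']

theorem comm_qq (x : R) (n : ℕ) (h : ∀ i, 1 ≤ i → i ≤ n → t i * x = x * t i) :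
    qq t n * x = x * qq t n := by
  induction n with
  | zero => simp [qq]
  | succ n ih =>
    rw [qq_succ, mul_assoc, ih fun i h1 h2 => h i h1 (by omega), ← mul_assoc,
      h _ (by omega) le_rfl, mul_assoc]

theorem comm_aa (x : R) (n : ℕ) (h : ∀ i, 1 ≤ i → i ≤ n → t i * x = x * t i) :
    aa t n * x = x * aa t n := by
  induction n with
  | zero => simp [aa]
  | succ n ih =>
    rw [aa_succ, mul_assoc, comm_qq t x _ h, ← mul_assoc,
      ih fun i h1 h2 => h i h1 (by omega), mul_assoc]

variable (N : ℕ)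
  (hc : ∀ i j, 1 ≤ i → i + 2 ≤ j → j ≤ N → t i * t j = t j * t i)
  (hb : ∀ i, 1 ≤ i → i + 1 ≤ N → t i * t (i+1) * t i = t (i+1) * t i * t (i+1))

theorem qq_shift
    (hc : ∀ i j, 1 ≤ i → i + 2 ≤ j → j ≤ N → t i * t j = t j * t i)
    (hb : ∀ i, 1 ≤ i → i + 1 ≤ N → t i * t (i+1) * t i = t (i+1) * t i * t (i+1))
    (m : ℕ) (hm : m + 1 ≤ N) (j : ℕ) (h1 : 1 ≤ j) (h2 : j ≤ m) :
    qq t (m+1) * t (j+1) = t j * qq t (m+1) := by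
  induction m with
  | zero => omega
  | succ m ih =>
    rcases Nat.lt_or_ge j (m+1) with h | h
    · rw [qq_succ, mul_assoc, ih (by omega) (by omega), ← mul_assoc,
        ← hc j (m+1+1) h1 (by omega) hm, mul_assoc]
    · obtain rfl : j = m+1 := by omega
      rw [qq_succ, qq_succ, mul_assoc, mul_assoc,
        comm_qq t _ m (fun i a b => hc i _ a (by omega) hm),
        ← mul_assoc, ← mul_assoc, ← hb (m+1) h1 hm]
      simp only [mul_assoc]

theorem qq_shift_qq
    (hc : ∀ i j, 1 ≤ i → i + 2 ≤ j → j ≤ N → t i * t j = t j * t i)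
    (hb : ∀ i, 1 ≤ i → i + 1 ≤ N → t i * t (i+1) * t i = t (i+1) * t i * t (i+1))
    (m : ℕ) (hm : m + 1 ≤ N) (j : ℕ) (h2 : j ≤ m) :
    qq t (m+1) * qq t (j+1) = qq t j * qq t (m+1) * t 1 := by
  induction j with
  | zero => simp [qq_succ, qq_zero]
  | succ j ih =>
    rw [qq_succ t (j+1), ← mul_assoc, qq_shift t N hc hb m hm (j+1) (by omega) h2,
      mul_assoc, ih (by omega), qq_succ t j]
    simp only [mul_assoc]

theorem aa_conj
    (hc : ∀ i j, 1 ≤ i → i + 2 ≤ j → j ≤ N → t i * t j = t j * t i)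
    (hb : ∀ i, 1 ≤ i → i + 1 ≤ N → t i * t (i+1) * t i = t (i+1) * t i * t (i+1))
    (m : ℕ) (hm : m + 1 ≤ N) : t (m+1) * aa t (m+1) = aa t (m+1) * t 1 := by
  rcases m with _ | m
  · simp [aa, qq]
  · have h1 := comm_aa t (t (m+1+1)) m (fun i a b => hc i _ a (by omega) hm)
    rw [aa_succ, aa_succ, ← mul_assoc, ← mul_assoc, ← h1, mul_assoc (aa t m), ← qq_succ,
      mul_assoc, qq_shift_qq t N hc hb (m+1) hm (m+1) le_rfl]
    simp only [mul_assoc]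

theorem conj_mul' (A B x y : R) (h : A * B = 1) : (B * x * A) * (B * y * A) = B * (x * y) * A := by
  calc _ = B * x * (A * B) * y * A := by simp only [mul_assoc]
    _ = _ := by rw [h]; simp only [mul_assoc, one_mul]

end aux

theorem mk_rel {k : ℕ} {u u0 uk : ℂ} {x y : FA} (h : HeckeRel k u u0 uk x y) :
    (RingQuot.mkAlgHom ℂ (HeckeRel k u u0 uk) x : RingQuot (HeckeRel k u u0 uk)) =
      RingQuot.mkAlgHom ℂ (HeckeRel k u u0 uk) y :=
  RingQuot.mkAlgHom_rel ℂ h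

theorem quad_of {k : ℕ} {u u0 uk : ℂ} (i : ℕ) (z z' : ℂ)
    (h : HeckeRel k u u0 uk ((g i - cst z) * (g i + cst z')) 0) :
    (T k u u0 uk i - hc k u u0 uk z) * (T k u u0 uk i + hc k u u0 uk z') = 0 := by
  have := mk_rel h
  simp only [map_mul, map_sub, map_add, map_zero, cst, AlgHom.commutes] at this
  exact this

theorem inv_of {k : ℕ} {u u0 uk : ℂ} (x : Hecke k u u0 uk) (z : ℂ) (hz : z ≠ 0)
    (h : (x - hc k u u0 uk z) * (x + hc k u u0 uk z⁻¹) = 0) :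
    x * (x - hc k u u0 uk (z - z⁻¹)) = 1 ∧ (x - hc k u u0 uk (z - z⁻¹)) * x = 1 := by
  unfold hc at *
  have hcm := fun c : ℂ => Algebra.commutes c x
  have h1 : algebraMap ℂ (Hecke k u u0 uk) z * algebraMap ℂ (Hecke k u u0 uk) z⁻¹ = 1 := by
    rw [← map_mul, mul_inv_cancel₀ hz, map_one]
  have key : x * (x - algebraMap ℂ (Hecke k u u0 uk) (z - z⁻¹)) = 1 := by
    rw [sub_mul, mul_add, mul_add, h1, hcm z] at h
    rw [map_sub, mul_sub, mul_sub, ← sub_eq_zero, ← h]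
    abel
  refine ⟨key, ?_⟩
  rw [← key, sub_mul, mul_sub, hcm]

/-- properties of `T_{0^∨} = W_1 T_0⁻¹` and `T_{w_A}`. -/
theorem statement8 (k : ℕ) (hk : 2 ≤ k) (u u0 uk : ℂ)
    (hu : u ≠ 0) (hu0 : u0 ≠ 0) (huk : uk ≠ 0)
    (T0v : Hecke k u u0 uk) (hT0v : T0v = W1 k u u0 uk * Tinv k u u0 uk 0)
    (TwA : Hecke k u u0 uk)
    (hTwA : TwA = ((List.range (k-1)).map (fun m =>
        (((List.range (m+1)).reverse).map (fun j => T k u u0 uk (j+1))).prod)).prod)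
    (TwAinv : Hecke k u u0 uk)
    (hTwAinv : TwAinv = ((List.range (k-1)).reverse.map (fun m =>
        ((List.range (m+1)).map (fun j => Tinv k u u0 uk (j+1))).prod)).prod) :
    (T0v - hc k u u0 uk uk) * (T0v + hc k u u0 uk uk⁻¹) = 0 ∧
    T0v * T k u u0 uk 1 * T0v * T k u u0 uk 1
      = T k u u0 uk 1 * T0v * T k u u0 uk 1 * T0v ∧
    TwAinv * T k u u0 uk k * TwA = T0v ∧
    TwAinv * T k u u0 uk (k-1) * TwA = T k u u0 uk 1 := by
  obtain ⟨n, rfl⟩ : ∃ n, k = n + 2 := ⟨k - 2, by omega⟩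
  set t := T (n+2) u u0 uk with ht
  set ti := Tinv (n+2) u u0 uk with hti
  have quadk : (t (n+2) - hc (n+2) u u0 uk uk) * (t (n+2) + hc (n+2) u u0 uk uk⁻¹) = 0 :=
    quad_of _ _ _ HeckeRel.quadk
  have hi : ∀ i, 1 ≤ i → i ≤ n + 1 → t i * ti i = 1 ∧ ti i * t i = 1 := by
    intro i h1 h2
    have := inv_of (t i) u hu (quad_of _ _ _ (HeckeRel.quad i h1 (by omega)))
    rw [hti, Tinv, if_neg (by omega), if_neg (by omega)]
    exact this
  have h0 : t 0 * ti 0 = 1 := by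
    have := inv_of (t 0) u0 hu0 (quad_of _ _ _ HeckeRel.quad0)
    rw [hti, Tinv, if_pos rfl]
    exact this.1
  have hcm : ∀ i j, 1 ≤ i → i + 2 ≤ j → j ≤ n + 2 → t i * t j = t j * t i := by
    intro i j h1 h2 h3
    have := mk_rel (HeckeRel.comm (k := n+2) (u := u) (u0 := u0) (uk := uk)
      i j (by omega) h3 (by omega))
    simp only [map_mul] at this
    exact this
  have hb : ∀ i, 1 ≤ i → i + 1 ≤ n + 1 → t i * t (i+1) * t i = t (i+1) * t i * t (i+1) := by
    intro i h1 h2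
    have := mk_rel (HeckeRel.braid (k := n+2) (u := u) (u0 := u0) (uk := uk) i h1 (by omega))
    simp only [map_mul] at this
    exact this
  have hbk : t (n+1) * t (n+2) * t (n+1) * t (n+2) = t (n+2) * t (n+1) * t (n+2) * t (n+1) := by
    have := mk_rel (HeckeRel.braidk (k := n+2) (u := u) (u0 := u0) (uk := uk))
    simp only [map_mul] at this
    exact this
  have hA : TwA = aa t (n+1) := hTwA
  have hAi : TwAinv = ai ti (n+1) := hTwAinv
  have hV : T0v = qi ti (n+1) * t (n+2) * qq t (n+1) := by
    have : T0v = qi ti (n+1) * t (n+2) * qq t (n+1) * t 0 * ti 0 := hT0v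
    rw [this, mul_assoc _ (t 0), h0, mul_one]
  have hAAi : TwA * TwAinv = 1 := by
    rw [hA, hAi]; exact aa_ai t ti _ fun i a b => (hi i a b).1
  have hAiA : TwAinv * TwA = 1 := by
    rw [hA, hAi]; exact ai_aa t ti _ fun i a b => (hi i a b).2
  have h4 : TwAinv * t (n+1) * TwA = t 1 := by
    have := aa_conj t (n+1) (fun i j a b c => hcm i j a b (by omega)) hb n le_rfl
    rw [← hA] at this
    rw [mul_assoc, this, ← mul_assoc, hAiA, one_mul]
  have h3 : TwAinv * t (n+2) * TwA = T0v := by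
    have h5 := comm_aa t (t (n+2)) n (fun i a b => hcm i _ a (by omega) le_rfl)
    have h6 := ai_aa t ti n fun i a b => (hi i a (by omega)).2
    rw [hA, hAi, hV, ai_succ, aa_succ]
    calc _ = qi ti (n+1) * ai ti n * (t (n+2) * aa t n) * qq t (n+1) := by
          simp only [mul_assoc]
      _ = qi ti (n+1) * (ai ti n * aa t n) * t (n+2) * qq t (n+1) := by
          rw [← h5]; simp only [mul_assoc]
      _ = _ := by rw [h6, mul_one]
  have hcc : ∀ z, TwAinv * hc (n+2) u u0 uk z * TwA = hc (n+2) u u0 uk z := by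
    intro z
    rw [hc, ← Algebra.commutes, mul_assoc, hAiA, mul_one]
  refine ⟨?_, ?_, h3, h4⟩
  · rw [← h3, ← hcc uk, ← hcc uk⁻¹, ← sub_mul, ← mul_sub, ← add_mul, ← mul_add,
      conj_mul' _ _ _ _ hAAi, quadk, mul_zero, zero_mul]
  · rw [← h3, ← h4]
    simp only [conj_mul' _ _ _ _ hAAi]
    rw [hbk]

end TwoBoundaryTL
end
end

section
/- Let A be a unital associative ℂ-algebra, let t^{1/2}, t_0^{1/2}, a, a_0 ∈ ℂ^× with t = (t^{1/2})² and t_0 = (t_0^{1/2})², and let x, y ∈ A satisfy (x − t_0^{1/2})(x + t_0^{−1/2}) = 0 and (y − t^{1/2})(y + t^{−1/2}) = 0. Set e = a_0^{−1}(x − t_0^{1/2}) and f = a^{−1}(y − t^{1/2}). Then xyxy = yxyx if and only if a_0²a²efef − a_0a(t_0^{−1/2}t^{1/2} + t_0^{1/2}t^{−1/2})ef = a_0²a²fefe − a_0a(t_0^{−1/2}t^{1/2} + t_0^{1/2}t^{−1/2})fe. In particular, if a_0a = t_0^{−1/2}t^{1/2} + t_0^{1/2}t^{−1/2}, then xyxy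 = yxyx if and only if efef − ef = fefe − fe. -/
theorem aux_key {A : Type*} [Ring A] [Algebra ℂ A] (p p' q q' : ℂ) (hp : p * p' = 1)
    (hq : q * q' = 1) (X Y : A)
    (hx : X * (X + (p + p') • (1 : A)) = 0) (hy : Y * (Y + (q + q') • (1 : A)) = 0) :
    (X + p • (1 : A)) * (Y + q • (1 : A)) * (X + p • (1 : A)) * (Y + q • (1 : A)) -
      (Y + q • (1 : A)) * (X + p • (1 : A)) * (Y + q • (1 : A)) * (X + p • (1 : A)) =
    (X * Y * X * Y - (p' * q + p * q') • (X * Y)) -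
      (Y * X * Y * X - (p' * q + p * q') • (Y * X)) := by
  have hX : X * X = -((p + p') • X) := by
    rw [mul_add, mul_smul_comm, mul_one] at hx
    exact eq_neg_of_add_eq_zero_left hx
  have hY : Y * Y = -((q + q') • Y) := by
    rw [mul_add, mul_smul_comm, mul_one] at hy
    exact eq_neg_of_add_eq_zero_left hy
  have hX2 : ∀ Z, X * (X * Z) = -((p + p') • (X * Z)) := fun Z => by
    rw [← mul_assoc, hX, neg_mul, smul_mul_assoc]
  have hY2 : ∀ Z, Y * (Y * Z) = -((q + q') • (Y * Z)) := fun Z => by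
    rw [← mul_assoc, hY, neg_mul, smul_mul_assoc]
  simp only [mul_add, add_mul, mul_assoc, smul_mul_assoc, mul_smul_comm, mul_one, one_mul,
    hX, hY, hX2, hY2, mul_neg, neg_mul, smul_add, smul_neg]
  module

/-- for elements `x, y` of a unital associative `ℂ`-algebra satisfying
`(x - t_0^{1/2})(x + t_0^{-1/2}) = 0` and `(y - t^{1/2})(y + t^{-1/2}) = 0`, with
`e = a_0⁻¹(x - t_0^{1/2})` and `f = a⁻¹(y - t^{1/2})`, the relation `xyxy = yxyx` is equivalent
to `a_0²a²efef - a_0a(t_0^{-1/2}t^{1/2}+t_0^{1/2}t^{-1/2})ef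
  = a_0²a²fefe - a_0a(t_0^{-1/2}t^{1/2}+t_0^{1/2}t^{-1/2})fe`;
and if `a_0a = t_0^{-1/2}t^{1/2}+t_0^{1/2}t^{-1/2}` it is equivalent to
`efef - ef = fefe - fe`. -/
theorem statement11 (A : Type*) [Ring A] [Algebra ℂ A]
    (u u0 a a0 : ℂ) (hu : u ≠ 0) (hu0 : u0 ≠ 0) (ha : a ≠ 0) (ha0 : a0 ≠ 0)
    (x y : A)
    (hx : (x - algebraMap ℂ A u0) * (x + algebraMap ℂ A u0⁻¹) = 0)
    (hy : (y - algebraMap ℂ A u) * (y + algebraMap ℂ A u⁻¹) = 0)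
    (e f : A)
    (he : e = a0⁻¹ • (x - algebraMap ℂ A u0))
    (hf : f = a⁻¹ • (y - algebraMap ℂ A u)) :
    (x * y * x * y = y * x * y * x ↔
      (a0 ^ 2 * a ^ 2) • (e * f * e * f) - (a0 * a * (u0⁻¹ * u + u0 * u⁻¹)) • (e * f)
        = (a0 ^ 2 * a ^ 2) • (f * e * f * e) - (a0 * a * (u0⁻¹ * u + u0 * u⁻¹)) • (f * e)) ∧
    (a0 * a = u0⁻¹ * u + u0 * u⁻¹ →
      (x * y * x * y = y * x * y * x ↔
        e * f * e * f - e * f = f * e * f * e - f * e)) := by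
  have h1 : a0 • e = x - algebraMap ℂ A u0 := by rw [he, smul_inv_smul₀ ha0]
  have h2 : a • f = y - algebraMap ℂ A u := by rw [hf, smul_inv_smul₀ ha]
  have hx1 : x = a0 • e + u0 • (1 : A) := by rw [h1, Algebra.algebraMap_eq_smul_one]; abel
  have hy1 : y = a • f + u • (1 : A) := by rw [h2, Algebra.algebraMap_eq_smul_one]; abel
  have key := aux_key u0 u0⁻¹ u u⁻¹ (mul_inv_cancel₀ hu0) (mul_inv_cancel₀ hu) (a0 • e) (a • f)
    (by rw [← hx, h1]; congr 1; simp only [Algebra.algebraMap_eq_smul_one]; module)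
    (by rw [← hy, h2]; congr 1; simp only [Algebra.algebraMap_eq_smul_one]; module)
  rw [← hx1, ← hy1] at key
  have key2 : x * y * x * y - y * x * y * x =
      ((a0 ^ 2 * a ^ 2) • (e * f * e * f) - (a0 * a * (u0⁻¹ * u + u0 * u⁻¹)) • (e * f)) -
      ((a0 ^ 2 * a ^ 2) • (f * e * f * e) - (a0 * a * (u0⁻¹ * u + u0 * u⁻¹)) • (f * e)) := by
    rw [key]
    simp only [smul_mul_assoc, mul_smul_comm]
    module
  have main : x * y * x * y = y * x * y * x ↔
      (a0 ^ 2 * a ^ 2) • (e * f * e * f) - (a0 * a * (u0⁻¹ * u + u0 * u⁻¹)) • (e * f)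
        = (a0 ^ 2 * a ^ 2) • (f * e * f * e) - (a0 * a * (u0⁻¹ * u + u0 * u⁻¹)) • (f * e) := by
    rw [← sub_eq_zero, key2, sub_eq_zero]
  refine ⟨main, fun h => ?_⟩
  rw [main, ← h]
  have h3 : a0 * a * (a0 * a) = a0 ^ 2 * a ^ 2 := by ring
  rw [h3, ← smul_sub, ← smul_sub]
  exact (smul_right_injective A (by positivity : a0 ^ 2 * a ^ 2 ≠ 0)).eq_iff
end

section
/- In TL_k the following identities hold: (ae_1)T_0T_1 = t^{1/2}(ae_1)T_0^{−1}; T_1T_0(ae_1) = t^{1/2}T_0^{−1}(ae_1); (ae_{k−1})T_kT_{k−1} = t^{1/2}(ae_{k−1})T_k^{−1}; and T_{k−1}T_k(ae_{k−1}) = t^{1/2}T_k^{−1}(ae_{k−1}). -/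
noncomputable section

open scoped BigOperators

namespace TwoBoundaryTL

variable (k : ℕ) (u u0 uk a a0 ak : ℂ)

theorem flip_aux {A : Type*} [Ring A] [Algebra ℂ A] (X Y : A) (u v : ℂ) (hu : u ≠ 0)
    (hq : (X - algebraMap ℂ A u) * (X + algebraMap ℂ A u⁻¹) = 0)
    (hb : (X - algebraMap ℂ A u) * (Y - algebraMap ℂ A v) * (X - algebraMap ℂ A u)
      = (v⁻¹ * u + v * u⁻¹) • (X - algebraMap ℂ A u)) :
    (X - algebraMap ℂ A u) * Y * X
      = u • ((X - algebraMap ℂ A u) * (Y - algebraMap ℂ A (v - v⁻¹))) ∧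
    X * Y * (X - algebraMap ℂ A u)
      = u • ((Y - algebraMap ℂ A (v - v⁻¹)) * (X - algebraMap ℂ A u)) := by
  obtain ⟨E, rfl⟩ : ∃ E, X = E + algebraMap ℂ A u := ⟨X - algebraMap ℂ A u, by simp⟩
  obtain ⟨F, rfl⟩ : ∃ F, Y = F + algebraMap ℂ A v := ⟨Y - algebraMap ℂ A v, by simp⟩
  simp only [add_sub_cancel_right] at hq hb ⊢
  have hE : E * E = -(u + u⁻¹) • E := by
    rw [add_assoc, ← map_add, mul_add, ← Algebra.commutes, ← Algebra.smul_def] at hq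
    rw [neg_smul]; exact eq_neg_of_add_eq_zero_left hq
  simp only [Algebra.algebraMap_eq_smul_one, mul_add, add_mul, mul_sub, sub_mul, mul_smul_comm,
    smul_mul_assoc, mul_one, one_mul, hb, hE]
  constructor
  · match_scalars <;> (try field_simp) <;> ring
  · match_scalars <;> (try field_simp) <;> ring

theorem T_quad (k : ℕ) (u u0 uk : ℂ) (i : ℕ) (h1 : 1 ≤ i) (h2 : i ≤ k - 1) :
    (T k u u0 uk i - hc k u u0 uk u) * (T k u u0 uk i + hc k u u0 uk u⁻¹) = 0 := by
  have h := RingQuot.mkAlgHom_rel ℂ (HeckeRel.quad (k := k) (u := u) (u0 := u0) (uk := uk) i h1 h2)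
  simp only [map_mul, map_sub, map_add, map_zero, cst, AlgHom.commutes] at h
  exact h

theorem a_e (k : ℕ) (u u0 uk a a0 ak : ℂ) (ha : a ≠ 0) (i : ℕ) (h1 : i ≠ 0) (h2 : i ≠ k) :
    a • e k u u0 uk a a0 ak i = T k u u0 uk i - hc k u u0 uk u := by
  simp [e, h1, h2, smul_smul, ha]

theorem flip_main (k : ℕ) (u u0 uk a a0 ak v b : ℂ) (i j : ℕ) (hu : u ≠ 0) (ha : a ≠ 0)
    (h1 : 1 ≤ i) (h2 : i ≤ k - 1) (h3 : i ≠ k)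
    (he : b • e k u u0 uk a a0 ak j = T k u u0 uk j - hc k u u0 uk v)
    (hT : Tinv k u u0 uk j = T k u u0 uk j - hc k u u0 uk (v - v⁻¹))
    (hr : TLRel k u u0 uk a a0 ak ((b * a ^ 2) • (e k u u0 uk a a0 ak i * e k u u0 uk a a0 ak j *
        e k u u0 uk a a0 ak i) - (a * (v⁻¹ * u + v * u⁻¹)) • e k u u0 uk a a0 ak i) 0) :
    π k u u0 uk a a0 ak ((a • e k u u0 uk a a0 ak i) * T k u u0 uk j * T k u u0 uk i)
      = u • π k u u0 uk a a0 ak ((a • e k u u0 uk a a0 ak i) * Tinv k u u0 uk j) ∧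
    π k u u0 uk a a0 ak (T k u u0 uk i * T k u u0 uk j * (a • e k u u0 uk a a0 ak i))
      = u • π k u u0 uk a a0 ak (Tinv k u u0 uk j * (a • e k u u0 uk a a0 ak i)) := by
  have hr' : π k u u0 uk a a0 ak _ = π k u u0 uk a a0 ak _ := RingQuot.mkAlgHom_rel ℂ hr
  have e1 : (b * a ^ 2) • (e k u u0 uk a a0 ak i * e k u u0 uk a a0 ak j *
        e k u u0 uk a a0 ak i) = (a • e k u u0 uk a a0 ak i) * (b • e k u u0 uk a a0 ak j) *
        (a • e k u u0 uk a a0 ak i) := by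
    simp only [smul_mul_assoc, mul_smul_comm, smul_smul]
    congr 1; ring
  have hE := a_e k u u0 uk a a0 ak ha i (by omega) h3
  rw [e1, mul_comm a, mul_smul, hE, he, map_zero, map_sub, sub_eq_zero] at hr'
  have hq := congrArg (π k u u0 uk a a0 ak) (T_quad k u u0 uk i h1 h2)
  rw [hE, hT]
  simp only [hc, map_mul, map_sub, map_add, map_zero, map_smul, AlgHom.commutes] at hr' hq ⊢
  have := flip_aux (π k u u0 uk a a0 ak (T k u u0 uk i)) (π k u u0 uk a a0 ak (T k u u0 uk j)) u v hu hq hr'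
  simpa only [map_sub] using this

/-- pole-flip identities in `TL_k`. -/
theorem statement12 (k : ℕ) (hk : 2 ≤ k) (u u0 uk a a0 ak : ℂ)
    (hu : u ≠ 0) (hu0 : u0 ≠ 0) (huk : uk ≠ 0) (ha : a ≠ 0) (ha0 : a0 ≠ 0) (hak : ak ≠ 0) :
    π k u u0 uk a a0 ak ((a • e k u u0 uk a a0 ak 1) * T k u u0 uk 0 * T k u u0 uk 1)
      = u • π k u u0 uk a a0 ak ((a • e k u u0 uk a a0 ak 1) * Tinv k u u0 uk 0) ∧
    π k u u0 uk a a0 ak (T k u u0 uk 1 * T k u u0 uk 0 * (a • e k u u0 uk a a0 ak 1))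
      = u • π k u u0 uk a a0 ak (Tinv k u u0 uk 0 * (a • e k u u0 uk a a0 ak 1)) ∧
    π k u u0 uk a a0 ak ((a • e k u u0 uk a a0 ak (k-1)) * T k u u0 uk k * T k u u0 uk (k-1))
      = u • π k u u0 uk a a0 ak ((a • e k u u0 uk a a0 ak (k-1)) * Tinv k u u0 uk k) ∧
    π k u u0 uk a a0 ak (T k u u0 uk (k-1) * T k u u0 uk k * (a • e k u u0 uk a a0 ak (k-1)))
      = u • π k u u0 uk a a0 ak (Tinv k u u0 uk k * (a • e k u u0 uk a a0 ak (k-1))) := by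
  obtain ⟨p, q⟩ := flip_main k u u0 uk a a0 ak u0 a0 1 0 hu ha le_rfl (by omega) (by omega)
    (by simp [e, smul_smul, ha0]) (by simp [Tinv]) TLRel.bd0
  obtain ⟨r, s⟩ := flip_main k u u0 uk a a0 ak uk ak (k-1) k hu ha (by omega) le_rfl (by omega)
    (by simp [e, smul_smul, hak, show k ≠ 0 by omega])
    (by simp [Tinv, show k ≠ 0 by omega]) TLRel.bdk
  exact ⟨p, q, r, s⟩

end TwoBoundaryTL
end
end

section
/- In TL_k the following identity holds: e_0T_1^{−1}T_0^{−1}T_1^{−1}e_0 = −t^{−1/2}(t_0^{1/2} + t_0^{−1/2})·e_0(ae_1)e_0 − t^{−1}t_0^{1/2}·e_0². -/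
noncomputable section

open scoped BigOperators

namespace TwoBoundaryTL

variable (k : ℕ) (u u0 uk a a0 ak : ℂ)

theorem aux_alg {A : Type*} [Ring A] [Algebra ℂ A] (x y : A) (u u0 v v0 a a0 : ℂ)
    (hu : u * v = 1) (hu0 : u0 * v0 = 1) (ha : a ≠ 0) (ha0 : a0 ≠ 0)
    (hx : x * x = (-(u0 + v0) / a0) • x) (hy : y * y = (-(u + v) / a) • y)
    (hyx : y * (x * y) = ((v0 * u + u0 * v) / (a0 * a)) • y) :
    x * (a • y + algebraMap ℂ A v) * (a0 • x + algebraMap ℂ A v0) *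
      (a • y + algebraMap ℂ A v) * x
      = (-(v * (u0 + v0))) • (x * (a • y) * x) - (v ^ 2 * u0) • (x * x) := by
  have hy' : ∀ z, y * (y * z) = (-(u + v) / a) • (y * z) := fun z => by
    rw [← mul_assoc, hy, smul_mul_assoc]
  have hx' : ∀ z, x * (x * z) = (-(u0 + v0) / a0) • (x * z) := fun z => by
    rw [← mul_assoc, hx, smul_mul_assoc]
  have hyx' : ∀ z, y * (x * (y * z)) = ((v0 * u + u0 * v) / (a0 * a)) • (y * z) := fun z => by
    rw [← mul_assoc x, ← mul_assoc, hyx, smul_mul_assoc]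
  simp only [Algebra.algebraMap_eq_smul_one, mul_add, add_mul, smul_mul_assoc, mul_smul_comm,
    mul_assoc, one_mul, mul_one, hx, hx', hy', hyx', smul_add, smul_smul]
  match_scalars
  · field_simp
    ring
  · field_simp
    ring

theorem e_quad {A : Type*} [Ring A] [Algebra ℂ A] (X : A) (u a : ℂ) (hu : u ≠ 0) (ha : a ≠ 0)
    (h : (X - algebraMap ℂ A u) * (X + algebraMap ℂ A u⁻¹) = 0) :
    (a⁻¹ • (X - algebraMap ℂ A u)) * (a⁻¹ • (X - algebraMap ℂ A u))
      = (-(u + u⁻¹) / a) • (a⁻¹ • (X - algebraMap ℂ A u)) := by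
  have h2 : (X - algebraMap ℂ A u) * (X - algebraMap ℂ A u)
      = (-(u + u⁻¹)) • (X - algebraMap ℂ A u) := by
    have h3 : (X - algebraMap ℂ A u) * (X - algebraMap ℂ A u)
        = (X - algebraMap ℂ A u) * (X + algebraMap ℂ A u⁻¹)
          - (X - algebraMap ℂ A u) * algebraMap ℂ A (u + u⁻¹) := by
      rw [← mul_sub, map_add]; congr 1; abel
    rw [h3, h, zero_sub, ← Algebra.commutes, ← Algebra.smul_def, neg_smul]
  rw [smul_mul_smul_comm, h2, smul_smul, smul_smul]
  congr 1
  field_simp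

/-- the identity
`e_0 T_1⁻¹ T_0⁻¹ T_1⁻¹ e_0 = -t^{-1/2}(t_0^{1/2}+t_0^{-1/2}) e_0 (ae_1) e_0 - t⁻¹ t_0^{1/2} e_0²`
in `TL_k`. -/
theorem statement15 (k : ℕ) (hk : 2 ≤ k) (u u0 uk a a0 ak : ℂ)
    (hu : u ≠ 0) (hu0 : u0 ≠ 0) (huk : uk ≠ 0) (ha : a ≠ 0) (ha0 : a0 ≠ 0) (hak : ak ≠ 0) :
    π k u u0 uk a a0 ak (e k u u0 uk a a0 ak 0 * Tinv k u u0 uk 1 * Tinv k u u0 uk 0 *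
        Tinv k u u0 uk 1 * e k u u0 uk a a0 ak 0)
      = (-(u⁻¹ * (u0 + u0⁻¹))) • π k u u0 uk a a0 ak
          (e k u u0 uk a a0 ak 0 * (a • e k u u0 uk a a0 ak 1) * e k u u0 uk a a0 ak 0)
        - ((u ^ 2)⁻¹ * u0) • π k u u0 uk a a0 ak
          (e k u u0 uk a a0 ak 0 * e k u u0 uk a a0 ak 0) := by
  have hk1 : (1 : ℕ) ≠ k := by omega
  have q0 : (T k u u0 uk 0 - algebraMap ℂ _ u0) * (T k u u0 uk 0 + algebraMap ℂ _ u0⁻¹) = 0 := by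
    have h := RingQuot.mkAlgHom_rel ℂ (HeckeRel.quad0 (k := k) (u := u) (u0 := u0) (uk := uk))
    rw [map_mul, map_sub, map_add, cst, cst, AlgHom.commutes, AlgHom.commutes, map_zero] at h
    exact h
  have q1 : (T k u u0 uk 1 - algebraMap ℂ _ u) * (T k u u0 uk 1 + algebraMap ℂ _ u⁻¹) = 0 := by
    have h := RingQuot.mkAlgHom_rel ℂ (HeckeRel.quad (k := k) (u := u) (u0 := u0) (uk := uk) 1
      le_rfl (by omega))
    rw [map_mul, map_sub, map_add, cst, cst, AlgHom.commutes, AlgHom.commutes, map_zero] at h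
    exact h
  have he0 : e k u u0 uk a a0 ak 0 = a0⁻¹ • (T k u u0 uk 0 - algebraMap ℂ _ u0) := by
    simp [e, hc]
  have he1 : e k u u0 uk a a0 ak 1 = a⁻¹ • (T k u u0 uk 1 - algebraMap ℂ _ u) := by
    simp [e, hc, hk1]
  have hx := e_quad _ u0 a0 hu0 ha0 q0
  have hy := e_quad _ u a hu ha q1
  rw [← he0] at hx
  rw [← he1] at hy
  have ht0 : Tinv k u u0 uk 0 = a0 • e k u u0 uk a a0 ak 0 + algebraMap ℂ _ u0⁻¹ := by
    rw [he0, smul_smul, mul_inv_cancel₀ ha0, one_smul]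
    simp only [Tinv, hc, if_true, map_sub]
    abel
  have ht1 : Tinv k u u0 uk 1 = a • e k u u0 uk a a0 ak 1 + algebraMap ℂ _ u⁻¹ := by
    rw [he1, smul_smul, mul_inv_cancel₀ ha, one_smul]
    simp only [Tinv, hc, one_ne_zero, hk1, if_false, map_sub]
    abel
  have hyx := RingQuot.mkAlgHom_rel ℂ (TLRel.bd0 (k := k) (u := u) (u0 := u0) (uk := uk)
    (a := a) (a0 := a0) (ak := ak))
  change π k u u0 uk a a0 ak _ = π k u u0 uk a a0 ak _ at hyx
  rw [map_sub, map_zero, sub_eq_zero, map_smul, map_smul, map_mul, map_mul, mul_assoc] at hyx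
  have hx2 := congrArg (π k u u0 uk a a0 ak) hx
  have hy2 := congrArg (π k u u0 uk a a0 ak) hy
  rw [map_mul, map_smul] at hx2 hy2
  have key := aux_alg (π k u u0 uk a a0 ak (e k u u0 uk a a0 ak 0))
    (π k u u0 uk a a0 ak (e k u u0 uk a a0 ak 1)) u u0 u⁻¹ u0⁻¹ a a0
    (mul_inv_cancel₀ hu) (mul_inv_cancel₀ hu0) ha ha0 hx2 hy2 (by
      have hne : a0 * a ^ 2 ≠ 0 := mul_ne_zero ha0 (pow_ne_zero 2 ha)
      rw [← inv_smul_smul₀ hne (_ * _), hyx, smul_smul]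
      congr 1
      field_simp)
  rw [ht0, ht1]
  simp only [map_mul, map_add, map_smul, AlgHom.commutes]
  rw [key, inv_pow]

end TwoBoundaryTL
end
end
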